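/- arXiv:1305.3733 — 9 statements merged into one kernel-verified Lean document; each statement's English description precedes it below -/
import Mathlib

section
/- Let G ∈ {0,1}^{k×n} be a generator matrix that is injective as a linear map over GF(2), with k ≥ 1. Define η_max as the largest integer η ≥ 0 such that there do NOT exist distinct messages m ≠ m' in {0,1}^k and erasure matrices E₁, E₂ ∈ 2^G of weight at most η with m(G+E₁) = m'(G+E₂) over GF(2). Then η_max = (min over ordered pairs of distinct messages (m,m') of η₀(c,c')) − 1, where c, c' are the ternary codewords of m, m', and η₀(c,c') = w₃ if w₃ > w₇+w₂+w₄; η₀(c,c') = w₇ if w₇ > w₃+w₂+w₄; and η₀(c,c') = ⌈(w₂+w₃+w₄+w₇)/2⌉ otherwise. -/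
/-- The weight of a binary matrix: its number of `1` entries. -/
def wt {k n : ℕ} (E : Matrix (Fin k) (Fin n) (ZMod 2)) : ℕ :=
  (Finset.univ.filter fun p : Fin k × Fin n => E p.1 p.2 = 1).card

/-- `E ∈ 2^G`: the erasure matrix `E` has `1`s only where `G` has `1`s. -/
def IsErasureFor {k n : ℕ} (G E : Matrix (Fin k) (Fin n) (ZMod 2)) : Prop :=
  ∀ i j, E i j = 1 → G i j = 1

/-- `s_j(m) = Σᵢ mᵢ G_{ij}` computed over the integers: the number of rows `i`
with `mᵢ = 1` and `G_{ij} = 1`. -/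
def intSum {k n : ℕ} (G : Matrix (Fin k) (Fin n) (ZMod 2))
    (m : Fin k → ZMod 2) (j : Fin n) : ℕ :=
  (Finset.univ.filter fun i => m i = 1 ∧ G i j = 1).card

/-- Block size `w₂`: coordinates where the ternary codeword of `m` is `1`
and that of `m'` is a soft zero `0̄`. -/
def w2 {k n : ℕ} (G : Matrix (Fin k) (Fin n) (ZMod 2))
    (m m' : Fin k → ZMod 2) : ℕ :=
  (Finset.univ.filter fun j =>
    Odd (intSum G m j) ∧ Even (intSum G m' j) ∧ intSum G m' j ≠ 0).card

/-- Block size `w₃`: coordinates where the ternary codeword of `m` is `1`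
and that of `m'` is a hard zero `0`. -/
def w3 {k n : ℕ} (G : Matrix (Fin k) (Fin n) (ZMod 2))
    (m m' : Fin k → ZMod 2) : ℕ :=
  (Finset.univ.filter fun j => Odd (intSum G m j) ∧ intSum G m' j = 0).card

/-- Block size `w₄`: coordinates where the ternary codeword of `m` is a soft
zero `0̄` and that of `m'` is `1`. -/
def w4 {k n : ℕ} (G : Matrix (Fin k) (Fin n) (ZMod 2))
    (m m' : Fin k → ZMod 2) : ℕ :=
  (Finset.univ.filter fun j =>
    (Even (intSum G m j) ∧ intSum G m j ≠ 0) ∧ Odd (intSum G m' j)).card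

/-- Block size `w₇`: coordinates where the ternary codeword of `m` is a hard
zero `0` and that of `m'` is `1`. -/
def w7 {k n : ℕ} (G : Matrix (Fin k) (Fin n) (ZMod 2))
    (m m' : Fin k → ZMod 2) : ℕ :=
  (Finset.univ.filter fun j => intSum G m j = 0 ∧ Odd (intSum G m' j)).card

/-- The distance `η₀(c,c')` between the ternary codewords of `m` and `m'`:
`w₃` if `w₃ > w₇+w₂+w₄`; `w₇` if `w₇ > w₃+w₂+w₄`;
`⌈(w₂+w₃+w₄+w₇)/2⌉` otherwise. -/
def eta0 {k n : ℕ} (G : Matrix (Fin k) (Fin n) (ZMod 2))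
    (m m' : Fin k → ZMod 2) : ℕ :=
  if w7 G m m' + w2 G m m' + w4 G m m' < w3 G m m' then w3 G m m'
  else if w3 G m m' + w2 G m m' + w4 G m m' < w7 G m m' then w7 G m m'
  else (w2 G m m' + w3 G m m' + w4 G m m' + w7 G m m' + 1) / 2

open Finset

section ErasureCode

variable {k n : ℕ}

lemma ZMod.two_mul_eq_ite (a b : ZMod 2) : a * b = if a = 1 ∧ b = 1 then 1 else 0 := by
  revert a b
  decide

lemma vecMul_eq_intSum (G : Matrix (Fin k) (Fin n) (ZMod 2)) (m : Fin k → ZMod 2) (j : Fin n) :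
    Matrix.vecMul m G j = (intSum G m j : ZMod 2) := by
  simp only [Matrix.vecMul, dotProduct, ZMod.two_mul_eq_ite, Finset.sum_boole, intSum]

/-- The coordinates where the codewords of `m` and `m'` differ. -/
def diffSet (G : Matrix (Fin k) (Fin n) (ZMod 2)) (m m' : Fin k → ZMod 2) : Finset (Fin n) :=
  univ.filter fun j => Matrix.vecMul m G j ≠ Matrix.vecMul m' G j

/-- The coordinates where the ternary codeword of `m` is `1` and that of `m'` is a hard zero. -/
def oneHard (G : Matrix (Fin k) (Fin n) (ZMod 2)) (m m' : Fin k → ZMod 2) : Finset (Fin n) :=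
  univ.filter fun j => Odd (intSum G m j) ∧ intSum G m' j = 0

/-- The coordinates where one of the ternary symbols of `m` and `m'` is `1` and the other is a
soft zero. -/
def oneSoft (G : Matrix (Fin k) (Fin n) (ZMod 2)) (m m' : Fin k → ZMod 2) : Finset (Fin n) :=
  univ.filter fun j => (Odd (intSum G m j) ∧ Even (intSum G m' j) ∧ intSum G m' j ≠ 0) ∨
    ((Even (intSum G m j) ∧ intSum G m j ≠ 0) ∧ Odd (intSum G m' j))

lemma vecMul_ne_iff (G : Matrix (Fin k) (Fin n) (ZMod 2)) (m m' : Fin k → ZMod 2) (j : Fin n) :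
    Matrix.vecMul m G j ≠ Matrix.vecMul m' G j ↔
      ¬ (Odd (intSum G m j) ↔ Odd (intSum G m' j)) := by
  rw [vecMul_eq_intSum, vecMul_eq_intSum, Ne, ZMod.natCast_eq_natCast_iff', Nat.odd_iff,
    Nat.odd_iff]
  omega

lemma card_oneHard (G : Matrix (Fin k) (Fin n) (ZMod 2)) (m m' : Fin k → ZMod 2) :
    (oneHard G m m').card = w3 G m m' := rfl

lemma card_oneHard_swap (G : Matrix (Fin k) (Fin n) (ZMod 2)) (m m' : Fin k → ZMod 2) :
    (oneHard G m' m).card = w7 G m m' := by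
  simp only [oneHard, w7, and_comm]

lemma card_oneSoft (G : Matrix (Fin k) (Fin n) (ZMod 2)) (m m' : Fin k → ZMod 2) :
    (oneSoft G m m').card = w2 G m m' + w4 G m m' := by
  rw [oneSoft, filter_or, card_union_of_disjoint, w2, w4]
  rw [disjoint_filter]
  grind

lemma disjoint_oneHard_swap (G : Matrix (Fin k) (Fin n) (ZMod 2)) (m m' : Fin k → ZMod 2) :
    Disjoint (oneHard G m m') (oneHard G m' m) := by
  rw [oneHard, oneHard, disjoint_filter]
  grind

lemma disjoint_oneHard_oneSoft (G : Matrix (Fin k) (Fin n) (ZMod 2)) (m m' : Fin k → ZMod 2) :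
    Disjoint (oneHard G m m') (oneSoft G m m') := by
  rw [oneHard, oneSoft, disjoint_filter]
  grind

lemma oneSoft_comm (G : Matrix (Fin k) (Fin n) (ZMod 2)) (m m' : Fin k → ZMod 2) :
    oneSoft G m m' = oneSoft G m' m := by
  ext j
  simp only [oneSoft, mem_filter, mem_univ, true_and]
  tauto

lemma diffSet_eq_union (G : Matrix (Fin k) (Fin n) (ZMod 2)) (m m' : Fin k → ZMod 2) :
    diffSet G m m' = oneHard G m m' ∪ oneHard G m' m ∪ oneSoft G m m' := by
  ext j
  simp only [diffSet, oneHard, oneSoft, mem_union, mem_filter, mem_univ, true_and,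
    vecMul_ne_iff, Nat.odd_iff, Nat.even_iff]
  omega

lemma card_diffSet (G : Matrix (Fin k) (Fin n) (ZMod 2)) (m m' : Fin k → ZMod 2) :
    (diffSet G m m').card = w2 G m m' + w3 G m m' + w4 G m m' + w7 G m m' := by
  rw [diffSet_eq_union, card_union_of_disjoint, card_union_of_disjoint, card_oneHard,
    card_oneHard_swap, card_oneSoft]
  · ring
  · exact disjoint_oneHard_swap G m m'
  · rw [disjoint_union_left]
    refine ⟨disjoint_oneHard_oneSoft G m m', ?_⟩
    rw [oneSoft_comm]
    exact disjoint_oneHard_oneSoft G m' m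

lemma eta0_le_iff (G : Matrix (Fin k) (Fin n) (ZMod 2)) (m m' : Fin k → ZMod 2) (η : ℕ) :
    eta0 G m m' ≤ η ↔ (oneHard G m m').card ≤ η ∧ (oneHard G m' m).card ≤ η ∧
      (diffSet G m m').card ≤ 2 * η := by
  rw [card_diffSet, card_oneHard, card_oneHard_swap, eta0]
  split_ifs <;> omega

lemma card_support_vecMul_le_wt (E : Matrix (Fin k) (Fin n) (ZMod 2)) (m : Fin k → ZMod 2) :
    (univ.filter fun j => Matrix.vecMul m E j ≠ 0).card ≤ wt E := by
  refine (card_le_card fun j hj => ?_).trans (card_image_le (f := Prod.snd))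
  rw [mem_filter, vecMul_eq_intSum] at hj
  have hpos : intSum E m j ≠ 0 := fun h => hj.2 (by rw [h, Nat.cast_zero])
  obtain ⟨i, hi⟩ := card_ne_zero.mp hpos
  rw [mem_filter] at hi
  exact mem_image.mpr ⟨(i, j), by simpa using hi.2.2, rfl⟩

lemma IsErasureFor.vecMul_eq_zero {G E : Matrix (Fin k) (Fin n) (ZMod 2)} (hE : IsErasureFor G E)
    {m : Fin k → ZMod 2} {j : Fin n} (hj : intSum G m j = 0) : Matrix.vecMul m E j = 0 := by
  have hle : intSum E m j ≤ intSum G m j :=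
    card_le_card (monotone_filter_right _ fun i _ hi => ⟨hi.1, hE i j hi.2⟩)
  rw [vecMul_eq_intSum, Nat.le_zero.mp (hle.trans_eq hj), Nat.cast_zero]

/-- Any set of coordinates carrying no hard zero of `m` can be flipped with one erasure each. -/
lemma exists_erasure_of_subset (G : Matrix (Fin k) (Fin n) (ZMod 2)) (m : Fin k → ZMod 2)
    (A : Finset (Fin n)) (hA : ∀ j ∈ A, intSum G m j ≠ 0) :
    ∃ E, IsErasureFor G E ∧ wt E ≤ A.card ∧
      ∀ j, Matrix.vecMul m E j = if j ∈ A then 1 else 0 := by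
  have hrow : ∀ j ∈ A, ∃ i, m i = 1 ∧ G i j = 1 := fun j hj => by
    obtain ⟨i, hi⟩ := card_ne_zero.mp (hA j hj)
    exact ⟨i, (mem_filter.mp hi).2⟩
  choose r hm hG using hrow
  refine ⟨Matrix.of fun i j => if ∃ hj : j ∈ A, i = r j hj then 1 else 0, fun i j h => ?_, ?_, fun j => ?_⟩
  · simp only [Matrix.of_apply, ite_eq_left_iff, zero_ne_one, imp_false, not_not] at h
    obtain ⟨hj, rfl⟩ := h
    exact hG j hj
  · refine (card_le_card fun p hp => ?_).trans
      ((card_image_le (s := A.attach) (f := fun j => (r j.1 j.2, j.1))).trans_eq card_attach)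
    simp only [mem_filter, mem_univ, true_and, Matrix.of_apply, ite_eq_left_iff, zero_ne_one,
      imp_false, not_not] at hp
    obtain ⟨hj, hi⟩ := hp
    exact mem_image.mpr ⟨⟨p.2, hj⟩, mem_attach _ _, Prod.ext hi.symm rfl⟩
  · by_cases hj : j ∈ A <;> simp [Matrix.vecMul, dotProduct, hj, hm]

lemma eta0_le_of_erasures {G E₁ E₂ : Matrix (Fin k) (Fin n) (ZMod 2)} {m m' : Fin k → ZMod 2}
    {η : ℕ} (hE₁ : IsErasureFor G E₁) (hw₁ : wt E₁ ≤ η) (hE₂ : IsErasureFor G E₂)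
    (hw₂ : wt E₂ ≤ η) (heq : Matrix.vecMul m (G + E₁) = Matrix.vecMul m' (G + E₂)) :
    eta0 G m m' ≤ η := by
  rw [Matrix.vecMul_add, Matrix.vecMul_add] at heq
  have h₁ := (card_support_vecMul_le_wt E₁ m).trans hw₁
  have h₂ := (card_support_vecMul_le_wt E₂ m').trans hw₂
  have hD : ∀ j ∈ diffSet G m m', Matrix.vecMul m E₁ j ≠ 0 ∨ Matrix.vecMul m' E₂ j ≠ 0 := by
    intro j hj
    by_contra! h
    have hc := congrFun heq j
    rw [Pi.add_apply, Pi.add_apply, h.1, h.2, add_zero, add_zero] at hc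
    exact (mem_filter.mp hj).2 hc
  rw [eta0_le_iff]
  refine ⟨(card_le_card fun j hj => ?_).trans h₁, (card_le_card fun j hj => ?_).trans h₂, ?_⟩
  · have hjD : j ∈ diffSet G m m' := by
      rw [diffSet_eq_union]; exact mem_union_left _ (mem_union_left _ hj)
    have hz := hE₂.vecMul_eq_zero (mem_filter.mp hj).2.2
    exact mem_filter.mpr ⟨mem_univ j, (hD j hjD).resolve_right (not_not.mpr hz)⟩
  · have hjD : j ∈ diffSet G m m' := by
      rw [diffSet_eq_union]; exact mem_union_left _ (mem_union_right _ hj)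
    have hz := hE₁.vecMul_eq_zero (mem_filter.mp hj).2.2
    exact mem_filter.mpr ⟨mem_univ j, (hD j hjD).resolve_left (not_not.mpr hz)⟩
  · have hsub : diffSet G m m' ⊆ (univ.filter fun j => Matrix.vecMul m E₁ j ≠ 0) ∪
        univ.filter fun j => Matrix.vecMul m' E₂ j ≠ 0 := fun j hj => by
      simpa using hD j hj
    have := (card_le_card hsub).trans (card_union_le _ _)
    omega

lemma exists_erasures_of_eta0_le {G : Matrix (Fin k) (Fin n) (ZMod 2)} {m m' : Fin k → ZMod 2}
    {η : ℕ} (h : eta0 G m m' ≤ η) :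
    ∃ E₁ E₂, IsErasureFor G E₁ ∧ wt E₁ ≤ η ∧ IsErasureFor G E₂ ∧ wt E₂ ≤ η ∧
      Matrix.vecMul m (G + E₁) = Matrix.vecMul m' (G + E₂) := by
  rw [eta0_le_iff, card_diffSet, card_oneHard, card_oneHard_swap] at h
  obtain ⟨S, hS, hScard⟩ := exists_subset_card_eq
    (min_le_left (oneSoft G m m').card (η - w3 G m m'))
  have hT : (oneSoft G m m' \ S).card = (oneSoft G m m').card - S.card :=
    card_sdiff_of_subset hS
  rw [card_oneSoft] at hScard hT
  have hsoft : ∀ j ∈ oneSoft G m m', intSum G m j ≠ 0 ∧ intSum G m' j ≠ 0 := fun j hj => by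
    simp only [oneSoft, mem_filter, mem_univ, true_and, Nat.odd_iff, Nat.even_iff] at hj
    omega
  have hhard : ∀ m m' : Fin k → ZMod 2, ∀ j ∈ oneHard G m m', intSum G m j ≠ 0 :=
    fun m m' j hj => (mem_filter.mp hj).2.1.pos.ne'
  obtain ⟨E₁, hE₁, hw₁, hv₁⟩ := exists_erasure_of_subset G m (oneHard G m m' ∪ S) fun j hj =>
    (mem_union.mp hj).elim (hhard m m' j) fun hj => (hsoft j (hS hj)).1
  obtain ⟨E₂, hE₂, hw₂, hv₂⟩ := exists_erasure_of_subset G m'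
    (oneHard G m' m ∪ (oneSoft G m m' \ S)) fun j hj =>
    (mem_union.mp hj).elim (hhard m' m j) fun hj => (hsoft j (mem_sdiff.mp hj).1).2
  have hc₁ := card_union_le (oneHard G m m') S
  have hc₂ := card_union_le (oneHard G m' m) (oneSoft G m m' \ S)
  rw [card_oneHard] at hc₁
  rw [card_oneHard_swap] at hc₂
  refine ⟨E₁, E₂, hE₁, by omega, hE₂, by omega, funext fun j => ?_⟩
  rw [Matrix.vecMul_add, Matrix.vecMul_add, Pi.add_apply, Pi.add_apply, hv₁, hv₂]
  have hD : Matrix.vecMul m G j ≠ Matrix.vecMul m' G j ↔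
      j ∈ oneHard G m m' ∪ oneHard G m' m ∪ oneSoft G m m' := by
    rw [← diffSet_eq_union, diffSet, mem_filter, and_iff_right (mem_univ j)]
  have hflip : ∀ a b : ZMod 2, a ≠ b → a + 1 = b + 0 ∧ a + 0 = b + 1 := by decide
  have hd₁ : j ∈ oneHard G m m' → j ∉ oneHard G m' m :=
    fun hj => disjoint_left.mp (disjoint_oneHard_swap G m m') hj
  have hd₂ : j ∈ oneHard G m m' → j ∉ oneSoft G m m' :=
    fun hj => disjoint_left.mp (disjoint_oneHard_oneSoft G m m') hj
  have hd₃ : j ∈ oneHard G m' m → j ∉ oneSoft G m' m :=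
    fun hj => disjoint_left.mp (disjoint_oneHard_oneSoft G m' m) hj
  rw [oneSoft_comm] at hd₃
  have hSj := @hS j
  simp only [mem_union, mem_sdiff] at hD ⊢
  by_cases hne : Matrix.vecMul m G j = Matrix.vecMul m' G j
  · have hn := mt hD.mpr (not_not.mpr hne)
    rw [if_neg (by grind only), if_neg (by grind only), hne]
  · obtain ⟨hl, hr⟩ := hflip _ _ hne
    have hmem := hD.mp hne
    by_cases hA : j ∈ oneHard G m m' ∨ j ∈ S
    · rw [if_pos hA, if_neg (by grind only), hl]
    · rw [if_neg hA, if_pos (by grind only), hr]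

lemma eta0_pos {G : Matrix (Fin k) (Fin n) (ZMod 2)}
    (hinj : Function.Injective fun m : Fin k → ZMod 2 => Matrix.vecMul m G)
    {m m' : Fin k → ZMod 2} (hne : m ≠ m') : 0 < eta0 G m m' := by
  by_contra! h
  have hcard := ((eta0_le_iff G m m' 0).mp h).2.2
  rw [mul_zero, Nat.le_zero, card_eq_zero, diffSet, filter_eq_empty_iff] at hcard
  exact hne (hinj (funext fun j => not_not.mp (hcard (mem_univ j))))

end ErasureCode

/-- For an injective generator matrix `G` with `k ≥ 1`, the
largest `η` such that no distinct messages `m ≠ m'` and erasure matrices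
`E₁, E₂ ∈ 2^G` of weight at most `η` satisfy `m(G+E₁) = m'(G+E₂)` equals
`(min over ordered pairs of distinct messages of η₀(c,c')) − 1`. -/
theorem stmt0 (k n : ℕ) (hk : 1 ≤ k) (G : Matrix (Fin k) (Fin n) (ZMod 2))
    (hinj : Function.Injective fun m : Fin k → ZMod 2 => Matrix.vecMul m G) :
    IsGreatest
      {η : ℕ | ¬ ∃ (m m' : Fin k → ZMod 2) (E₁ E₂ : Matrix (Fin k) (Fin n) (ZMod 2)),
          m ≠ m' ∧
          IsErasureFor G E₁ ∧ wt E₁ ≤ η ∧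
          IsErasureFor G E₂ ∧ wt E₂ ≤ η ∧
          Matrix.vecMul m (G + E₁) = Matrix.vecMul m' (G + E₂)}
      (sInf {v : ℕ | ∃ m m' : Fin k → ZMod 2, m ≠ m' ∧ v = eta0 G m m'} - 1) := by
  have hpos : ∀ v ∈ {v : ℕ | ∃ m m' : Fin k → ZMod 2, m ≠ m' ∧ v = eta0 G m m'}, 0 < v := by
    rintro v ⟨m, m', hne, rfl⟩
    exact eta0_pos hinj hne
  have hnonempty : {v : ℕ | ∃ m m' : Fin k → ZMod 2, m ≠ m' ∧ v = eta0 G m m'}.Nonempty :=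
    ⟨_, 0, 1, fun h => zero_ne_one (congrFun h ⟨0, hk⟩), rfl⟩
  have hmem := Nat.sInf_mem hnonempty
  have hmin := hpos _ hmem
  constructor
  · rintro ⟨m, m', E₁, E₂, hne, hE₁, hw₁, hE₂, hw₂, heq⟩
    have hle := eta0_le_of_erasures hE₁ hw₁ hE₂ hw₂ heq
    have := Nat.sInf_le (s := {v : ℕ | ∃ m m' : Fin k → ZMod 2, m ≠ m' ∧ v = eta0 G m m'})
      ⟨m, m', hne, rfl⟩
    omega
  · intro η hη
    by_contra! hlt
    obtain ⟨m, m', hne, hv⟩ := hmem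
    obtain ⟨E₁, E₂, h⟩ := exists_erasures_of_eta0_le (G := G) (m := m) (m' := m') (η := η)
      (by omega)
    exact hη ⟨m, m', E₁, E₂, hne, h⟩
end

section
/- Let G ∈ {0,1}^{k×n} be a generator matrix that is injective as a linear map over GF(2), and let η ≥ 1 be an integer. Then the following are equivalent: (i) perfect decoding with at most η erasures holds, i.e., there are no distinct messages m ≠ m' in {0,1}^k and erasure matrices E₁, E₂ ∈ 2^G_η (not necessarily distinct) with m(G+E₁) = m'(G+E₂) over GF(2); (ii) no codebook ambiguity occurs at level η, i.e., there are no DISTINCT erasure matrices E₁ ≠ E₂ in 2^G_η and distinct messages m ≠ m' with m(G+E₁) = m'(G+E₂) over GF(2). Consequently, the maximum number of erasures allowing perfect decoding equals the largest integer η with no codebook ambiguity at level η. -/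
/-- Perfect decoding with at most `η` erasures: no distinct messages
`m ≠ m'` and erasure matrices `E₁, E₂ ∈ 2^G_η` (not necessarily distinct)
satisfy `m(G+E₁) = m'(G+E₂)`. -/
def PerfectDecoding {k n : ℕ} (G : Matrix (Fin k) (Fin n) (ZMod 2)) (η : ℕ) : Prop :=
  ¬ ∃ (m m' : Fin k → ZMod 2) (E₁ E₂ : Matrix (Fin k) (Fin n) (ZMod 2)),
      m ≠ m' ∧
      IsErasureFor G E₁ ∧ wt E₁ ≤ η ∧
      IsErasureFor G E₂ ∧ wt E₂ ≤ η ∧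
      Matrix.vecMul m (G + E₁) = Matrix.vecMul m' (G + E₂)

/-- No codebook ambiguity at level `η`: no *distinct* erasure matrices
`E₁ ≠ E₂` in `2^G_η` and distinct messages `m ≠ m'` satisfy
`m(G+E₁) = m'(G+E₂)`. -/
def NoAmbiguity {k n : ℕ} (G : Matrix (Fin k) (Fin n) (ZMod 2)) (η : ℕ) : Prop :=
  ¬ ∃ (m m' : Fin k → ZMod 2) (E₁ E₂ : Matrix (Fin k) (Fin n) (ZMod 2)),
      m ≠ m' ∧ E₁ ≠ E₂ ∧
      IsErasureFor G E₁ ∧ wt E₁ ≤ η ∧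
      IsErasureFor G E₂ ∧ wt E₂ ≤ η ∧
      Matrix.vecMul m (G + E₁) = Matrix.vecMul m' (G + E₂)

/-- For an injective generator matrix, a collision between `m` and `m'` under a common erasure
matrix `E` yields one between `m - m'` under `E` and the zero message under the zero erasure
matrix, so perfect decoding and absence of ambiguity agree at every level. -/
theorem perfectDecoding_iff_noAmbiguity {k n : ℕ} {G : Matrix (Fin k) (Fin n) (ZMod 2)}
    (hinj : Function.Injective fun m : Fin k → ZMod 2 => Matrix.vecMul m G) (η : ℕ) :
    PerfectDecoding G η ↔ NoAmbiguity G η := by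
  constructor
  · rintro h ⟨m, m', E₁, E₂, hm, -, h'⟩
    exact h ⟨m, m', E₁, E₂, hm, h'⟩
  · rintro h ⟨m, m', E₁, E₂, hm, h₁, hw₁, h₂, hw₂, heq⟩
    by_cases hE : E₁ = E₂
    · subst hE
      refine h ⟨m - m', 0, E₁, 0, sub_ne_zero.mpr hm, ?_, h₁, hw₁, ?_, ?_, ?_⟩
      · rintro rfl
        exact hm (hinj (by simpa using heq))
      · intro i j hij
        simp at hij
      · simp [wt]
      · rw [Matrix.sub_vecMul, heq, sub_self, Matrix.zero_vecMul]
    · exact h ⟨m, m', E₁, E₂, hm, hE, h₁, hw₁, h₂, hw₂, heq⟩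

/-- For an injective generator matrix `G` and any `η ≥ 1`,
perfect decoding with at most `η` erasures is equivalent to the absence of
codebook ambiguity at level `η`. Consequently, the maximum number of erasures
allowing perfect decoding equals the largest `η` with no codebook ambiguity. -/
theorem stmt1 (k n : ℕ) (G : Matrix (Fin k) (Fin n) (ZMod 2))
    (hinj : Function.Injective fun m : Fin k → ZMod 2 => Matrix.vecMul m G) :
    (∀ η : ℕ, 1 ≤ η → (PerfectDecoding G η ↔ NoAmbiguity G η)) ∧
    (∀ M : ℕ, IsGreatest {η : ℕ | PerfectDecoding G η} M ↔
        IsGreatest {η : ℕ | NoAmbiguity G η} M) := by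
  refine ⟨fun η _ => perfectDecoding_iff_noAmbiguity hinj η, fun M => ?_⟩
  simp only [perfectDecoding_iff_noAmbiguity hinj]
end

section
/- Let G ∈ {0,1}^{k×n} be a generator matrix and let m ≠ m' be distinct messages in {0,1}^k with ternary codewords c, c'. Then the minimum, over all pairs of erasure matrices E₁, E₂ ∈ 2^G satisfying m(G+E₁) = m'(G+E₂) over GF(2), of max{w(E₁), w(E₂)} (this set of pairs is nonempty, e.g. E₁ = E₂ = G) equals: w₃ if w₃ > w₇+w₂+w₄; w₇ if w₇ > w₃+w₂+w₄; and ⌈(w₂+w₃+w₄+w₇)/2⌉ otherwise. -/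
lemma vecMul_eq_ite_odd {k n : ℕ} (G : Matrix (Fin k) (Fin n) (ZMod 2))
    (m : Fin k → ZMod 2) (j : Fin n) :
    Matrix.vecMul m G j = if Odd (intSum G m j) then 1 else 0 := by
  have hcast : Matrix.vecMul m G j = (intSum G m j : ZMod 2) := by
    have hmul : ∀ a b : ZMod 2, a * b = if a = 1 ∧ b = 1 then 1 else 0 := by decide
    simp only [Matrix.vecMul, dotProduct, intSum, hmul, Finset.sum_boole]
  rw [hcast]
  split_ifs with h
  · exact ZMod.natCast_eq_one_iff_odd.mpr h
  · exact ZMod.natCast_eq_zero_iff_even.mpr (Nat.not_odd_iff_even.mp h)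

lemma ite_add_ite_eq_of_xor {p q a b : Prop} [Decidable p] [Decidable q] [Decidable a]
    [Decidable b] (hxor : ¬(p ↔ q) ↔ a ∨ b) (hab : ¬(a ∧ b)) :
    ((if p then 1 else 0) + if a then 1 else 0 : ZMod 2) =
      (if q then 1 else 0) + if b then 1 else 0 := by
  have htwo : (1 : ZMod 2) + 1 = 0 := by decide
  by_cases p <;> by_cases q <;> by_cases a <;> by_cases b <;> simp_all

lemma mem_union_union_iff_of_subset {α : Type*} [DecidableEq α] {A B U T : Finset α}
    (hT : T ⊆ U) (x : α) : x ∈ (A ∪ B) ∪ U ↔ x ∈ A ∪ T ∨ x ∈ B ∪ (U \ T) := by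
  have := @hT x
  simp only [Finset.mem_union, Finset.mem_sdiff]
  tauto

lemma disjoint_union_union_sdiff {α : Type*} [DecidableEq α] {A B U T : Finset α}
    (hT : T ⊆ U) (hAB : Disjoint A B) (hA : Disjoint A U) (hB : Disjoint B U) :
    Disjoint (A ∪ T) (B ∪ (U \ T)) := by
  simp only [Finset.disjoint_union_left, Finset.disjoint_union_right]
  exact ⟨⟨hAB, (hB.mono_right hT).symm⟩, hA.mono_right Finset.sdiff_subset,
    Finset.disjoint_sdiff⟩

lemma exists_of_vecMul_ne_zero {k n : ℕ} {E : Matrix (Fin k) (Fin n) (ZMod 2)}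
    {m : Fin k → ZMod 2} {j : Fin n} (h : Matrix.vecMul m E j ≠ 0) :
    ∃ i, m i = 1 ∧ E i j = 1 := by
  obtain ⟨i, -, hi⟩ := Finset.exists_ne_zero_of_sum_ne_zero
    (show ∑ i, m i * E i j ≠ 0 from h)
  have hmul : ∀ a b : ZMod 2, a * b ≠ 0 → a = 1 ∧ b = 1 := by decide
  exact ⟨i, hmul _ _ hi⟩

lemma card_le_wt {k n : ℕ} (E : Matrix (Fin k) (Fin n) (ZMod 2)) (A : Finset (Fin n))
    (h : ∀ j ∈ A, ∃ i, E i j = 1) : A.card ≤ wt E := by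
  refine (Finset.card_le_card fun j hj => ?_).trans
    (Finset.card_image_le (f := Prod.snd) (s := Finset.univ.filter
      fun p : Fin k × Fin n => E p.1 p.2 = 1))
  obtain ⟨i, hi⟩ := h j hj
  exact Finset.mem_image.mpr ⟨(i, j), by simpa using hi, rfl⟩

/-- A set of columns on which the codeword of `m` is not a hard zero can be flipped
with one erasure per column. -/
lemma exists_erasure_flipping {k n : ℕ} (G : Matrix (Fin k) (Fin n) (ZMod 2))
    (m : Fin k → ZMod 2) (A : Finset (Fin n)) (h : ∀ j ∈ A, intSum G m j ≠ 0) :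
    ∃ E : Matrix (Fin k) (Fin n) (ZMod 2), IsErasureFor G E ∧ wt E = A.card ∧
      ∀ j, Matrix.vecMul m E j = if j ∈ A then 1 else 0 := by
  have hrow : ∀ j ∈ A, ∃ i, m i = 1 ∧ G i j = 1 := fun j hj => by
    obtain ⟨i, hi⟩ := Finset.card_ne_zero.mp (h j hj)
    exact ⟨i, by simpa using hi⟩
  rcases A.eq_empty_or_nonempty with rfl | ⟨j₀, hj₀⟩
  · exact ⟨0, by simp [IsErasureFor], by simp [wt], by simp⟩
  have : Nonempty (Fin k) := ⟨(hrow j₀ hj₀).choose⟩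
  choose! r hr using hrow
  refine ⟨fun i j => if j ∈ A ∧ i = r j then 1 else 0, ?_, ?_, ?_⟩
  · intro i j hij
    by_cases hA : j ∈ A ∧ i = r j
    · rw [hA.2]
      exact (hr j hA.1).2
    · simp [hA] at hij
  · unfold wt
    rw [← Finset.card_image_of_injective A
      (f := fun j => (r j, j)) fun a b hab => (Prod.ext_iff.mp hab).2]
    congr 1
    ext ⟨i, j⟩
    simp only [Finset.mem_filter, Finset.mem_univ, true_and, Finset.mem_image, Prod.mk.injEq]
    grind
  · intro j
    by_cases hA : j ∈ A
    · simp [Matrix.vecMul, dotProduct, hA, (hr j hA).1]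
    · simp [Matrix.vecMul, dotProduct, hA]

/-- For distinct messages `m ≠ m'`, the minimum over all pairs of
erasure matrices `E₁, E₂ ∈ 2^G` with `m(G+E₁) = m'(G+E₂)` of
`max{w(E₁), w(E₂)}` equals `η₀(c,c')` as given by the case formula above. -/
theorem stmt2 (k n : ℕ) (G : Matrix (Fin k) (Fin n) (ZMod 2))
    (m m' : Fin k → ZMod 2) (hmm : m ≠ m') :
    IsLeast {v : ℕ | ∃ E₁ E₂ : Matrix (Fin k) (Fin n) (ZMod 2),
        IsErasureFor G E₁ ∧ IsErasureFor G E₂ ∧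
        Matrix.vecMul m (G + E₁) = Matrix.vecMul m' (G + E₂) ∧
        v = max (wt E₁) (wt E₂)}
      (eta0 G m m') := by
  set S2 := Finset.univ.filter fun j =>
    Odd (intSum G m j) ∧ Even (intSum G m' j) ∧ intSum G m' j ≠ 0 with hS2
  set S3 := Finset.univ.filter fun j => Odd (intSum G m j) ∧ intSum G m' j = 0 with hS3
  set S4 := Finset.univ.filter fun j =>
    (Even (intSum G m j) ∧ intSum G m j ≠ 0) ∧ Odd (intSum G m' j) with hS4
  set S7 := Finset.univ.filter fun j => intSum G m j = 0 ∧ Odd (intSum G m' j) with hS7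
  have e2 : w2 G m m' = S2.card := rfl
  have e3 : w3 G m m' = S3.card := rfl
  have e4 : w4 G m m' = S4.card := rfl
  have e7 : w7 G m m' = S7.card := rfl
  have h24 : Disjoint S2 S4 := by
    rw [Finset.disjoint_left]
    intro j
    simp only [hS2, hS4, Finset.mem_filter, Finset.mem_univ, true_and]
    grind
  have h37 : Disjoint S3 S7 := by
    rw [Finset.disjoint_left]
    intro j
    simp only [hS3, hS7, Finset.mem_filter, Finset.mem_univ, true_and]
    grind
  have h3 : Disjoint S3 (S2 ∪ S4) := by
    rw [Finset.disjoint_left]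
    intro j
    simp only [hS2, hS3, hS4, Finset.mem_union, Finset.mem_filter, Finset.mem_univ, true_and]
    grind
  have h7 : Disjoint S7 (S2 ∪ S4) := by
    rw [Finset.disjoint_left]
    intro j
    simp only [hS2, hS7, hS4, Finset.mem_union, Finset.mem_filter, Finset.mem_univ, true_and]
    grind
  have hD : ∀ j, j ∈ (S3 ∪ S7) ∪ (S2 ∪ S4) ↔
      ¬(Odd (intSum G m j) ↔ Odd (intSum G m' j)) := by
    intro j
    simp only [hS2, hS3, hS4, hS7, Finset.mem_union, Finset.mem_filter, Finset.mem_univ,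
      true_and]
    grind
  have c24 := Finset.card_union_of_disjoint h24
  constructor
  · obtain ⟨t, hts, hmax⟩ : ∃ t ≤ (S2 ∪ S4).card,
        eta0 G m m' = max (S3.card + t) (S7.card + ((S2 ∪ S4).card - t)) := by
      simp only [eta0, e2, e3, e4, e7, c24]
      split_ifs
      · exact ⟨0, by omega, by omega⟩
      · exact ⟨S2.card + S4.card, by omega, by omega⟩
      · exact ⟨(S2.card + S3.card + S4.card + S7.card + 1) / 2 - S3.card, by omega, by omega⟩
    obtain ⟨T, hT, rfl⟩ := Finset.exists_subset_card_eq hts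
    obtain ⟨E₁, hE₁, hw₁, hv₁⟩ := exists_erasure_flipping G m (S3 ∪ T) (by
      intro j hj
      have := @hT j
      simp only [hS2, hS3, hS4, Finset.mem_union, Finset.mem_filter, Finset.mem_univ,
        true_and] at hj this
      grind)
    obtain ⟨E₂, hE₂, hw₂, hv₂⟩ := exists_erasure_flipping G m' (S7 ∪ ((S2 ∪ S4) \ T)) (by
      intro j hj
      simp only [hS2, hS7, hS4, Finset.mem_union, Finset.mem_sdiff, Finset.mem_filter,
        Finset.mem_univ, true_and] at hj
      grind)
    refine ⟨E₁, E₂, hE₁, hE₂, ?_, ?_⟩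
    · ext j
      rw [Matrix.vecMul_add, Matrix.vecMul_add, Pi.add_apply, Pi.add_apply, hv₁, hv₂,
        vecMul_eq_ite_odd, vecMul_eq_ite_odd]
      exact ite_add_ite_eq_of_xor
        ((hD j).symm.trans (mem_union_union_iff_of_subset hT j))
        fun h => Finset.disjoint_left.mp (disjoint_union_union_sdiff hT h37 h3 h7) h.1 h.2
    · rw [hw₁, hw₂, Finset.card_union_of_disjoint (h3.mono_right hT),
        Finset.card_union_of_disjoint (h7.mono_right Finset.sdiff_subset),
        Finset.card_sdiff_of_subset hT, hmax]
  · rintro _ ⟨E₁, E₂, hE₁, hE₂, hEq, rfl⟩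
    have key : ∀ j ∈ (S3 ∪ S7) ∪ (S2 ∪ S4),
        (∃ i, m i = 1 ∧ E₁ i j = 1) ∨ ∃ i, m' i = 1 ∧ E₂ i j = 1 := by
      intro j hj
      rw [hD] at hj
      by_contra! hcon
      have z₁ : Matrix.vecMul m E₁ j = 0 := by
        by_contra h
        obtain ⟨i, hi⟩ := exists_of_vecMul_ne_zero h
        exact hcon.1 i hi.1 hi.2
      have z₂ : Matrix.vecMul m' E₂ j = 0 := by
        by_contra h
        obtain ⟨i, hi⟩ := exists_of_vecMul_ne_zero h
        exact hcon.2 i hi.1 hi.2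
      have := congrFun hEq j
      rw [Matrix.vecMul_add, Matrix.vecMul_add, Pi.add_apply, Pi.add_apply, z₁, z₂,
        vecMul_eq_ite_odd, vecMul_eq_ite_odd] at this
      by_cases a : Odd (intSum G m j) <;> by_cases b : Odd (intSum G m' j) <;> simp_all
    have hardZero : ∀ (x : Fin k → ZMod 2) (E : Matrix (Fin k) (Fin n) (ZMod 2)) (j : Fin n),
        IsErasureFor G E → intSum G x j = 0 → ¬∃ i, x i = 1 ∧ E i j = 1 := by
      rintro x E j hE hx ⟨i, hi, hij⟩
      have : i ∈ Finset.univ.filter fun i => x i = 1 ∧ G i j = 1 := by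
        simp [hi, hE i j hij]
      rw [Finset.card_eq_zero.mp hx] at this
      simp at this
    have l3 : S3.card ≤ wt E₁ := card_le_wt _ _ fun j hj => by
      have h0 : intSum G m' j = 0 := (Finset.mem_filter.mp hj).2.2
      obtain ⟨i, -, hi⟩ := (key j (by simp [hj])).resolve_right (hardZero m' E₂ j hE₂ h0)
      exact ⟨i, hi⟩
    have l7 : S7.card ≤ wt E₂ := card_le_wt _ _ fun j hj => by
      have h0 : intSum G m j = 0 := (Finset.mem_filter.mp hj).2.1
      obtain ⟨i, -, hi⟩ := (key j (by simp [hj])).resolve_left (hardZero m E₁ j hE₁ h0)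
      exact ⟨i, hi⟩
    have lD : S3.card + S7.card + (S2.card + S4.card) ≤ wt E₁ + wt E₂ := by
      rw [← c24, ← Finset.card_union_of_disjoint h37,
        ← Finset.card_union_of_disjoint (Finset.disjoint_union_left.mpr ⟨h3, h7⟩)]
      set D := (S3 ∪ S7) ∪ (S2 ∪ S4)
      rw [← Finset.card_filter_add_card_filter_not (s := D) fun j => ∃ i, E₁ i j = 1]
      refine add_le_add (card_le_wt _ _ fun j hj => (Finset.mem_filter.mp hj).2)
        (card_le_wt _ _ fun j hj => ?_)
      obtain ⟨hjD, hj⟩ := Finset.mem_filter.mp hj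
      rcases key j hjD with ⟨i, -, hi⟩ | ⟨i, -, hi⟩
      · exact absurd ⟨i, hi⟩ hj
      · exact ⟨i, hi⟩
    simp only [eta0, e2, e3, e4, e7]
    split_ifs <;> omega
end

section
/- Let c, c' ∈ {0, 0̄, 1}^n be two ternary codewords with block sizes w₁,…,w₉. For a set S of coordinates j with c_j ∈ {1, 0̄}, let r(S) ∈ {0,1}^n be obtained from the binary value of c (where both 0 and 0̄ read as bit 0) by flipping exactly the coordinates in S; note δ(c→r(S)) = |S|. Define η₀(c⇝c'), the minimum number of bit errors needed to mistake c for c', as the minimum of |S| over all such S with δ(c'→r(S)) ≤ δ(c→r(S)) (and η₀ = ∞ if no such S exists). Then η₀(c⇝c') = ∞ if w₇ > w₃+w₂+w₄; η₀(c⇝c') = w₃ if w₃ > w₇+w₂+w₄; and η₀(c⇝c') = ⌈(w₂+w₃+w₄+w₇)/2⌉ otherwise. -/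
/-- A ternary codeword symbol: a one, a soft zero `0̄`, or a hard zero `0`. -/
inductive Tern : Type
  | one : Tern
  | soft : Tern
  | hard : Tern
  deriving DecidableEq

/-- The binary value of a ternary symbol (both soft and hard zeros read as
the bit `false`). -/
def Tern.bit : Tern → Bool
  | .one => true
  | _ => false

/-- The MD distance `δ(c_j → r_j)` on the symbol level:
`δ(0→0)=δ(0̄→0)=δ(1→1)=0`, `δ(1→0)=δ(0̄→1)=1`, `δ(0→1)=∞`. -/
def dSym : Tern → Bool → ℕ∞
  | .hard, true => ⊤
  | .one, false => 1
  | .soft, true => 1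
  | _, _ => 0

/-- The MD distance `δ(c → r) = Σⱼ δ(c_j → r_j)`. -/
def dWord {n : ℕ} (c : Fin n → Tern) (r : Fin n → Bool) : ℕ∞ :=
  ∑ j, dSym (c j) (r j)

/-- The word obtained from the binary value of `c` by flipping exactly the
coordinates in `S`. -/
def flipWord {n : ℕ} (c : Fin n → Tern) (S : Finset (Fin n)) : Fin n → Bool :=
  fun j => if j ∈ S then !(c j).bit else (c j).bit

/-- The block size `w_i(c,c')`: the number of coordinates `j` with
`(c_j, c'_j) = (a, b)`. -/
def blk {n : ℕ} (c c' : Fin n → Tern) (a b : Tern) : ℕ :=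
  (Finset.univ.filter fun j => c j = a ∧ c' j = b).card

section Blocks

variable {n : ℕ} (c c' : Fin n → Tern)

/-- The coordinates `j` with `(c_j, c'_j) = (a, b)`. -/
def blkSet (a b : Tern) : Finset (Fin n) :=
  Finset.univ.filter fun j => c j = a ∧ c' j = b

/-- The coordinates where exactly one of `c`, `c'` is a one and the other a soft zero. -/
def swapSet : Finset (Fin n) :=
  blkSet c c' Tern.one Tern.soft ∪ blkSet c c' Tern.soft Tern.one

lemma card_blkSet (a b : Tern) : (blkSet c c' a b).card = blk c c' a b := rfl

variable {c c'}

lemma mem_blkSet {a b : Tern} {j : Fin n} : j ∈ blkSet c c' a b ↔ c j = a ∧ c' j = b := by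
  simp [blkSet]

lemma mem_swapSet {j : Fin n} :
    j ∈ swapSet c c' ↔ c j = .one ∧ c' j = .soft ∨ c j = .soft ∧ c' j = .one := by
  simp [swapSet, mem_blkSet]

lemma card_swapSet :
    (swapSet c c').card = blk c c' Tern.one Tern.soft + blk c c' Tern.soft Tern.one := by
  rw [swapSet, Finset.card_union_of_disjoint, card_blkSet, card_blkSet]
  rw [Finset.disjoint_left]
  intro j h h'
  simp_all [mem_blkSet]

lemma disjoint_blkSet_swapSet : Disjoint (blkSet c c' Tern.one Tern.hard) (swapSet c c') := by
  rw [Finset.disjoint_left]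
  intro j h h'
  simp_all [mem_blkSet, mem_swapSet]

variable {S : Finset (Fin n)}

lemma sum_indicator_mem (T : Finset (Fin n)) :
    ∑ j, (if j ∈ T then 1 else 0 : ℕ∞) = (T.card : ℕ∞) := by
  simp

lemma dWord_flipWord_self (hS : ∀ j ∈ S, c j ≠ Tern.hard) :
    dWord c (flipWord c S) = (S.card : ℕ∞) := by
  rw [dWord, ← sum_indicator_mem]
  refine Finset.sum_congr rfl fun j _ => ?_
  have := hS j
  by_cases hj : j ∈ S <;> cases hc : c j <;> simp_all [flipWord, Tern.bit, dSym]

lemma ne_hard_of_dWord_ne_top {r : Fin n → Bool} (h : dWord c r ≠ ⊤) {j : Fin n}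
    (hj : r j = true) : c j ≠ Tern.hard := by
  intro hc
  refine h (top_unique ?_)
  calc (⊤ : ℕ∞) = dSym (c j) (r j) := by rw [hc, hj]; rfl
    _ ≤ dWord c r := Finset.single_le_sum (f := fun j => dSym (c j) (r j))
        (fun _ _ => zero_le) (Finset.mem_univ j)

lemma dWord_flipWord_balance (hS : ∀ j ∈ S, c j ≠ Tern.hard)
    (hr : ∀ j, flipWord c S j = true → c' j ≠ Tern.hard) :
    dWord c' (flipWord c S) +
        ((blk c c' Tern.one Tern.hard + 2 * (S ∩ swapSet c c').card : ℕ) : ℕ∞) =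
      dWord c (flipWord c S) +
        (((swapSet c c').card + blk c c' Tern.hard Tern.one : ℕ) : ℕ∞) := by
  simp only [← card_blkSet, Nat.cast_add, Nat.cast_mul, ← sum_indicator_mem, dWord,
    Finset.mul_sum, ← Finset.sum_add_distrib]
  refine Finset.sum_congr rfl fun j _ => ?_
  have h := hS j
  have h' := hr j
  by_cases hj : j ∈ S <;> cases hc : c j <;> cases hc' : c' j <;>
    simp_all [flipWord, Tern.bit, dSym, mem_blkSet, mem_swapSet, one_add_one_eq_two]

/-- With errors `S`, the word `c'` is as close as `c` exactly when this balance holds. -/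
lemma dWord_flipWord_le_iff (hS : ∀ j ∈ S, c j ≠ Tern.hard)
    (hr : ∀ j, flipWord c S j = true → c' j ≠ Tern.hard) :
    dWord c' (flipWord c S) ≤ dWord c (flipWord c S) ↔
      (swapSet c c').card + blk c c' Tern.hard Tern.one ≤
        blk c c' Tern.one Tern.hard + 2 * (S ∩ swapSet c c').card := by
  have h := dWord_flipWord_balance hS hr
  rw [dWord_flipWord_self hS] at h ⊢
  have hfin : dWord c' (flipWord c S) ≠ ⊤ := by
    intro htop
    rw [htop, top_add] at h
    exact ENat.natCast_ne_top _ (by exact_mod_cast h.symm)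
  obtain ⟨d, hd⟩ := ENat.ne_top_iff_exists.mp hfin
  rw [← hd] at h ⊢
  norm_cast at h ⊢
  lia

/-- Necessary conditions on an error set that makes `c` mistaken for `c'`. -/
lemma le_card_of_dWord_flipWord_le (hS : ∀ j ∈ S, c j ≠ Tern.hard)
    (hle : dWord c' (flipWord c S) ≤ dWord c (flipWord c S)) :
    ∃ t ≤ (swapSet c c').card,
      (swapSet c c').card + blk c c' Tern.hard Tern.one ≤ blk c c' Tern.one Tern.hard + 2 * t ∧
      blk c c' Tern.one Tern.hard + t ≤ S.card := by
  have hfin : dWord c' (flipWord c S) ≠ ⊤ :=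
    ne_top_of_le_ne_top (ENat.natCast_ne_top S.card) (dWord_flipWord_self hS ▸ hle)
  have hr : ∀ j, flipWord c S j = true → c' j ≠ Tern.hard :=
    fun j => ne_hard_of_dWord_ne_top hfin
  refine ⟨(S ∩ swapSet c c').card, Finset.card_le_card Finset.inter_subset_right,
    (dWord_flipWord_le_iff hS hr).mp hle, ?_⟩
  rw [← card_blkSet, ← Finset.card_union_of_disjoint
    (disjoint_blkSet_swapSet.mono_right Finset.inter_subset_right)]
  refine Finset.card_le_card (Finset.union_subset (fun j hj => ?_) Finset.inter_subset_left)
  obtain ⟨hone, hhard⟩ := mem_blkSet.mp hj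
  by_contra hjS
  exact hr j (by simp [flipWord, hjS, hone, Tern.bit]) hhard

/-- The necessary conditions are attained. -/
lemma exists_dWord_flipWord_le {t : ℕ} (ht : t ≤ (swapSet c c').card)
    (h : (swapSet c c').card + blk c c' Tern.hard Tern.one ≤
      blk c c' Tern.one Tern.hard + 2 * t) :
    ∃ S : Finset (Fin n), (∀ j ∈ S, c j ≠ Tern.hard) ∧
      dWord c' (flipWord c S) ≤ dWord c (flipWord c S) ∧
      S.card = blk c c' Tern.one Tern.hard + t := by
  obtain ⟨T, hT, rfl⟩ := Finset.exists_subset_card_eq ht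
  have hdisj : Disjoint (blkSet c c' Tern.one Tern.hard) (swapSet c c') :=
    disjoint_blkSet_swapSet
  have hS : ∀ j ∈ blkSet c c' Tern.one Tern.hard ∪ T, c j ≠ Tern.hard := by
    intro j hj
    rcases Finset.mem_union.mp hj with hj | hj
    · simp [(mem_blkSet.mp hj).1]
    · rcases mem_swapSet.mp (hT hj) with hj | hj <;> simp [hj.1]
  refine ⟨blkSet c c' Tern.one Tern.hard ∪ T, hS, (dWord_flipWord_le_iff hS ?_).mpr ?_, ?_⟩
  · intro j hj hc'
    have hjT : j ∉ T := fun hjT => by simpa [hc'] using mem_swapSet.mp (hT hjT)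
    cases hc : c j <;> simp [flipWord, mem_blkSet, hc, hc', hjT, Tern.bit] at hj
  · rwa [Finset.union_inter_distrib_right, Finset.disjoint_iff_inter_eq_empty.mp hdisj,
      Finset.empty_union, Finset.inter_eq_left.mpr hT]
  · rw [Finset.card_union_of_disjoint (hdisj.mono_right hT), card_blkSet]

end Blocks

/-- For ternary codewords `c, c'` with block sizes `w₁,…,w₉`,
the minimum number `η₀(c⇝c')` of bit errors needed to mistake `c` for `c'` —
i.e. the minimum of `|S|` over sets `S` of coordinates `j` with `c_j ∈ {1,0̄}`
such that `δ(c'→r(S)) ≤ δ(c→r(S))`, and `∞` if no such `S` exists — equals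
`∞` if `w₇ > w₃+w₂+w₄`, `w₃` if `w₃ > w₇+w₂+w₄`, and
`⌈(w₂+w₃+w₄+w₇)/2⌉` otherwise. -/
theorem stmt3 (n : ℕ) (c c' : Fin n → Tern) :
    sInf {v : ℕ∞ | ∃ S : Finset (Fin n),
        (∀ j ∈ S, c j ≠ Tern.hard) ∧
        dWord c' (flipWord c S) ≤ dWord c (flipWord c S) ∧
        v = (S.card : ℕ∞)} =
      (if blk c c' Tern.one Tern.soft + blk c c' Tern.one Tern.hard +
            blk c c' Tern.soft Tern.one < blk c c' Tern.hard Tern.one then ⊤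
       else if blk c c' Tern.hard Tern.one + blk c c' Tern.one Tern.soft +
            blk c c' Tern.soft Tern.one < blk c c' Tern.one Tern.hard then
         (blk c c' Tern.one Tern.hard : ℕ∞)
       else (((blk c c' Tern.one Tern.soft + blk c c' Tern.one Tern.hard +
            blk c c' Tern.soft Tern.one + blk c c' Tern.hard Tern.one + 1) / 2 : ℕ) : ℕ∞)) := by
  have lower {m : ℕ} (hm : ∀ t ≤ (swapSet c c').card,
      (swapSet c c').card + blk c c' Tern.hard Tern.one ≤ blk c c' Tern.one Tern.hard + 2 * t →
      m ≤ blk c c' Tern.one Tern.hard + t) (S : Finset (Fin n))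
      (hS : ∀ j ∈ S, c j ≠ Tern.hard)
      (hle : dWord c' (flipWord c S) ≤ dWord c (flipWord c S)) : (m : ℕ∞) ≤ S.card := by
    obtain ⟨t, ht, hbal, hcard⟩ := le_card_of_dWord_flipWord_le hS hle
    exact_mod_cast (hm t ht hbal).trans hcard
  have hswap := card_swapSet (c := c) (c' := c')
  split_ifs with h₁ h₂
  · rw [sInf_eq_top]
    rintro _ ⟨S, hS, hle, rfl⟩
    obtain ⟨t, ht, hbal, -⟩ := le_card_of_dWord_flipWord_le hS hle
    lia
  · apply le_antisymm
    · obtain ⟨S, hS, hle, hcard⟩ :=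
        exists_dWord_flipWord_le (c := c) (c' := c') (t := 0) (Nat.zero_le _) (by lia)
      exact sInf_le ⟨S, hS, hle, by rw [hcard, add_zero]⟩
    · refine le_sInf ?_
      rintro _ ⟨S, hS, hle, rfl⟩
      exact lower (fun t _ _ => Nat.le_add_right _ t) S hS hle
  · apply le_antisymm
    · obtain ⟨S, hS, hle, hcard⟩ :=
        exists_dWord_flipWord_le (c := c) (c' := c')
          (t := ((swapSet c c').card + blk c c' Tern.hard Tern.one -
            blk c c' Tern.one Tern.hard + 1) / 2) (by lia) (by lia)
      refine sInf_le ⟨S, hS, hle, congrArg Nat.cast ?_⟩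
      lia
    · refine le_sInf ?_
      rintro _ ⟨S, hS, hle, rfl⟩
      exact lower (fun t _ _ => by lia) S hS hle
end

section
/- For all integers m ≥ 2 and k with 1 ≤ k ≤ m−1, the binomial coefficient satisfies C(m,k) ≤ (e/(π·√2)) · m^m / (k^k · (m−k)^{m−k}). -/
/-- The factorial expressed through the Stirling sequence. -/
theorem factorial_eq_stirlingSeq_mul {n : ℕ} (hn : n ≠ 0) :
    (n.factorial : ℝ) =
      Stirling.stirlingSeq n * (Real.sqrt (2 * n) * ((n : ℝ) ^ n / Real.exp 1 ^ n)) := by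
  have hn' : (0 : ℝ) < n := by positivity
  rw [Stirling.stirlingSeq, div_pow]
  field_simp

/-- The Stirling sequence on positive integers is at most its first term. -/
theorem stirlingSeq_le_exp_one_div_sqrt_two {n : ℕ} (hn : n ≠ 0) :
    Stirling.stirlingSeq n ≤ Real.exp 1 / Real.sqrt 2 := by
  obtain ⟨j, rfl⟩ := Nat.exists_eq_succ_of_ne_zero hn
  rw [← Stirling.stirlingSeq_one]
  exact Stirling.stirlingSeq'_antitone (Nat.zero_le j)

/-- Upper bound for `(k + l).choose k` with both `k` and `l` positive. -/
theorem add_choose_le_exp_one_div_mul {k l : ℕ} (hk : k ≠ 0) (hl : l ≠ 0) :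
    ((k + l).choose k : ℝ) ≤
      Real.exp 1 / (Real.pi * Real.sqrt 2) *
        (((k + l : ℕ) : ℝ) ^ (k + l) / ((k : ℝ) ^ k * (l : ℝ) ^ l)) := by
  have hk' : (1 : ℝ) ≤ k := by exact_mod_cast Nat.one_le_iff_ne_zero.2 hk
  have hl' : (1 : ℝ) ≤ l := by exact_mod_cast Nat.one_le_iff_ne_zero.2 hl
  have hkl : k + l ≠ 0 := by omega
  have hsqrt : Real.sqrt (2 * (k + l : ℕ)) ≤ Real.sqrt (2 * k) * Real.sqrt (2 * l) := by
    rw [← Real.sqrt_mul (by positivity)]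
    apply Real.sqrt_le_sqrt
    push_cast
    nlinarith
  have hpi : Real.pi ≤ Stirling.stirlingSeq k * Stirling.stirlingSeq l := by
    rw [← Real.mul_self_sqrt Real.pi_pos.le]
    exact mul_le_mul (Stirling.sqrt_pi_le_stirlingSeq hk) (Stirling.sqrt_pi_le_stirlingSeq hl)
      (by positivity) ((Real.sqrt_nonneg _).trans (Stirling.sqrt_pi_le_stirlingSeq hk))
  have hfact : ((k + l).choose k : ℝ) * (k.factorial * l.factorial) = (k + l).factorial := by
    rw [← mul_assoc, Nat.choose_symm_add]
    exact_mod_cast Nat.add_choose_mul_factorial_mul_factorial k l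
  refine le_of_mul_le_mul_right ?_ (by positivity : (0 : ℝ) < k.factorial * l.factorial)
  rw [hfact, factorial_eq_stirlingSeq_mul hk, factorial_eq_stirlingSeq_mul hl,
    factorial_eq_stirlingSeq_mul hkl]
  set M : ℝ := ((k + l : ℕ) : ℝ) ^ (k + l) / Real.exp 1 ^ (k + l) with hM
  calc Stirling.stirlingSeq (k + l) * (Real.sqrt (2 * (k + l : ℕ)) * M)
      ≤ Real.exp 1 / Real.sqrt 2 * (Real.sqrt (2 * k) * Real.sqrt (2 * l) * M) := by
        gcongr
        exact stirlingSeq_le_exp_one_div_sqrt_two hkl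
    _ = Real.exp 1 / (Real.pi * Real.sqrt 2) * Real.pi *
          (Real.sqrt (2 * k) * Real.sqrt (2 * l) * M) := by
        field_simp
    _ ≤ Real.exp 1 / (Real.pi * Real.sqrt 2) *
          (Stirling.stirlingSeq k * Stirling.stirlingSeq l) *
          (Real.sqrt (2 * k) * Real.sqrt (2 * l) * M) := by
        gcongr
    _ = _ := by
        rw [hM, pow_add (Real.exp 1)]
        field_simp

/-- For integers `m ≥ 2` and `1 ≤ k ≤ m−1`,
`C(m,k) ≤ (e/(π√2)) · m^m / (k^k · (m−k)^{m−k})`. -/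
theorem stmt8 (m k : ℕ) (hm : 2 ≤ m) (hk1 : 1 ≤ k) (hk2 : k ≤ m - 1) :
    (m.choose k : ℝ) ≤
      Real.exp 1 / (Real.pi * Real.sqrt 2) *
        ((m : ℝ) ^ m / ((k : ℝ) ^ k * ((m : ℝ) - (k : ℝ)) ^ (m - k))) := by
  obtain ⟨l, rfl⟩ := Nat.exists_eq_add_of_le (show k ≤ m by omega)
  have hsub : ((k + l : ℕ) : ℝ) - k = l := by
    push_cast
    ring
  rw [hsub, Nat.add_sub_cancel_left]
  exact add_choose_le_exp_one_div_mul (by omega) (by omega)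
end

section
/- Let a, b > 0 and s > 0 be real numbers, and define ψ(x) = x^x for x > 0 with ψ(0) = 1. Then the supremum over t ∈ [0, s] of a^t · b^{s−t} · ψ(s)/(ψ(t)·ψ(s−t)) equals (a+b)^s, and this supremum is attained at t* = a·s/(a+b). -/
theorem Real.rpow_self_pos_of_nonneg {t : ℝ} (ht : 0 ≤ t) : 0 < t ^ t := by
  rcases ht.eq_or_lt with rfl | ht
  · simp
  · exact Real.rpow_pos_of_pos ht t

theorem Real.rpow_le_rpow_self_mul_exp_sub {x t : ℝ} (hx : 0 < x) (ht : 0 ≤ t) :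
    x ^ t ≤ t ^ t * Real.exp (x - t) := by
  rcases ht.eq_or_lt with rfl | ht
  · simpa using hx.le
  · have hbase : x / t ≤ Real.exp (x / t - 1) := by
      linarith [Real.add_one_le_exp (x / t - 1)]
    calc x ^ t = t ^ t * (x / t) ^ t := by
          rw [← Real.mul_rpow ht.le (by positivity), mul_div_cancel₀ _ ht.ne']
      _ ≤ t ^ t * Real.exp (x / t - 1) ^ t := by gcongr
      _ = t ^ t * Real.exp (x - t) := by
          rw [← Real.exp_mul, sub_mul, div_mul_cancel₀ _ ht.ne', one_mul]

/-- Gibbs' inequality for two outcomes of total mass `x + y`. -/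
theorem Real.rpow_mul_rpow_le_rpow_self_mul_rpow_self {x y t u : ℝ} (hx : 0 < x) (hy : 0 < y)
    (ht : 0 ≤ t) (hu : 0 ≤ u) (h : t + u = x + y) : x ^ t * y ^ u ≤ t ^ t * u ^ u := by
  calc x ^ t * y ^ u ≤ (t ^ t * Real.exp (x - t)) * (u ^ u * Real.exp (y - u)) := by
        gcongr
        · exact Real.rpow_le_rpow_self_mul_exp_sub hx ht
        · exact Real.rpow_le_rpow_self_mul_exp_sub hy hu
    _ = t ^ t * u ^ u * Real.exp ((x - t) + (y - u)) := by rw [Real.exp_add]; ring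
    _ = t ^ t * u ^ u := by
        rw [show (x - t) + (y - u) = 0 by linarith, Real.exp_zero, mul_one]

theorem Real.rpow_mul_rpow_mul_rpow_self_eq {a b s : ℝ} (ha : 0 < a) (hb : 0 < b) (hs : 0 < s)
    (t : ℝ) : a ^ t * b ^ (s - t) * s ^ s =
      (a + b) ^ s * ((a * s / (a + b)) ^ t * (s - a * s / (a + b)) ^ (s - t)) := by
  have hab : 0 < a + b := add_pos ha hb
  have hy : s - a * s / (a + b) = b * s / (a + b) := by field_simp; ring
  have hsplit (c : ℝ) (hc : 0 < c) : c ^ t * c ^ (s - t) = c ^ s := by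
    rw [← Real.rpow_add hc, add_sub_cancel]
  rw [hy, Real.div_rpow (by positivity) hab.le, Real.div_rpow (by positivity) hab.le,
    Real.mul_rpow ha.le hs.le, Real.mul_rpow hb.le hs.le, ← hsplit s hs, ← hsplit (a + b) hab]
  have := (Real.rpow_pos_of_pos hab t).ne'
  have := (Real.rpow_pos_of_pos hab (s - t)).ne'
  field_simp

/-- For reals `a, b, s > 0` and `ψ(x) = x^x` (real power, with
`ψ(0)=0^0=1`), the supremum over `t ∈ [0,s]` of
`a^t · b^{s−t} · ψ(s)/(ψ(t)·ψ(s−t))` equals `(a+b)^s`, attained at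
`t* = a·s/(a+b)`. -/
theorem stmt10 (a b s : ℝ) (ha : 0 < a) (hb : 0 < b) (hs : 0 < s) :
    (∀ t ∈ Set.Icc (0 : ℝ) s,
        a ^ t * b ^ (s - t) * (s ^ s) / (t ^ t * (s - t) ^ (s - t)) ≤ (a + b) ^ s) ∧
    a ^ (a * s / (a + b)) * b ^ (s - a * s / (a + b)) * (s ^ s) /
        ((a * s / (a + b)) ^ (a * s / (a + b)) *
          (s - a * s / (a + b)) ^ (s - a * s / (a + b))) = (a + b) ^ s ∧
    a * s / (a + b) ∈ Set.Icc (0 : ℝ) s := by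
  have hab : 0 < a + b := add_pos ha hb
  have hx : 0 < a * s / (a + b) := by positivity
  have hy : 0 < s - a * s / (a + b) := by
    rw [show s - a * s / (a + b) = b * s / (a + b) by field_simp; ring]
    positivity
  refine ⟨fun t ht => ?_, ?_, hx.le, by linarith⟩
  · have hu : 0 ≤ s - t := sub_nonneg.2 ht.2
    rw [div_le_iff₀ (mul_pos (Real.rpow_self_pos_of_nonneg ht.1)
      (Real.rpow_self_pos_of_nonneg hu)), Real.rpow_mul_rpow_mul_rpow_self_eq ha hb hs]
    exact mul_le_mul_of_nonneg_left
      (Real.rpow_mul_rpow_le_rpow_self_mul_rpow_self hx hy ht.1 hu (by ring))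
      (Real.rpow_nonneg hab.le s)
  · rw [Real.rpow_mul_rpow_mul_rpow_self_eq ha hb hs]
    exact mul_div_cancel_right₀ _ (mul_pos (Real.rpow_self_pos_of_nonneg hx.le)
      (Real.rpow_self_pos_of_nonneg hy.le)).ne'
end

section
/- Let γ₁, γ₂ > 0 and 0 < δ < γ₁+γ₂ be real numbers, define ψ(x) = x^x for x > 0 with ψ(0)=1, and set λ* = γ₁·δ/(γ₁+γ₂). Then ψ(γ₁)·ψ(γ₂) / ( ψ(λ*)·ψ(γ₁−λ*)·ψ(δ−λ*)·ψ(γ₂−δ+λ*) ) = ψ(γ₁+γ₂) / ( ψ(δ)·ψ(γ₁+γ₂−δ) ). -/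
/-- The value of `x ^ x` at `x = a * b / c`, in exponential form. -/
theorem rpow_self_mul_div {a b c : ℝ} (ha : 0 < a) (hb : 0 < b) (hc : 0 < c) :
    (a * b / c) ^ (a * b / c) =
      Real.exp ((Real.log a + Real.log b - Real.log c) * (a * b / c)) := by
  rw [Real.rpow_def_of_pos (by positivity), Real.log_div (by positivity) hc.ne',
    Real.log_mul ha.ne' hb.ne']

/-- For `γ₁, γ₂ > 0`, `0 < δ < γ₁+γ₂`, `ψ(x)=x^x` (real power,
`ψ(0)=1`), and `λ* = γ₁δ/(γ₁+γ₂)`: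
`ψ(γ₁)ψ(γ₂)/(ψ(λ*)ψ(γ₁−λ*)ψ(δ−λ*)ψ(γ₂−δ+λ*)) = ψ(γ₁+γ₂)/(ψ(δ)ψ(γ₁+γ₂−δ))`. -/
theorem stmt11 (γ₁ γ₂ δ : ℝ) (h1 : 0 < γ₁) (h2 : 0 < γ₂) (hδ0 : 0 < δ)
    (hδ : δ < γ₁ + γ₂) :
    (fun ψ : ℝ → ℝ =>
      ψ γ₁ * ψ γ₂ /
          (ψ (γ₁ * δ / (γ₁ + γ₂)) * ψ (γ₁ - γ₁ * δ / (γ₁ + γ₂)) *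
            ψ (δ - γ₁ * δ / (γ₁ + γ₂)) * ψ (γ₂ - δ + γ₁ * δ / (γ₁ + γ₂))) =
        ψ (γ₁ + γ₂) / (ψ δ * ψ (γ₁ + γ₂ - δ)))
      (fun x => x ^ x) := by
  have hs : 0 < γ₁ + γ₂ := by positivity
  have he : 0 < γ₁ + γ₂ - δ := sub_pos.mpr hδ
  have e₁ : γ₁ - γ₁ * δ / (γ₁ + γ₂) = γ₁ * (γ₁ + γ₂ - δ) / (γ₁ + γ₂) := by
    field_simp
  have e₂ : δ - γ₁ * δ / (γ₁ + γ₂) = γ₂ * δ / (γ₁ + γ₂) := by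
    field_simp
    ring
  have e₃ : γ₂ - δ + γ₁ * δ / (γ₁ + γ₂) = γ₂ * (γ₁ + γ₂ - δ) / (γ₁ + γ₂) := by
    field_simp
    ring
  beta_reduce
  rw [e₁, e₂, e₃, rpow_self_mul_div h1 hδ0 hs, rpow_self_mul_div h1 he hs,
    rpow_self_mul_div h2 hδ0 hs, rpow_self_mul_div h2 he hs,
    Real.rpow_def_of_pos h1, Real.rpow_def_of_pos h2, Real.rpow_def_of_pos hs,
    Real.rpow_def_of_pos hδ0, Real.rpow_def_of_pos he]
  simp only [← Real.exp_add, ← Real.exp_sub]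
  congr 1
  field_simp
  ring
end

section
/- Let γ₁, γ₂ > 0 and 0 < δ < γ₁+γ₂ be real numbers and define ψ(x) = x^x for x > 0 with ψ(0)=1. Then for every real λ with max(0, δ−γ₂) ≤ λ ≤ min(γ₁, δ), one has ψ(γ₁)·ψ(γ₂) / ( ψ(λ)·ψ(γ₁−λ)·ψ(δ−λ)·ψ(γ₂−δ+λ) ) ≤ ψ(γ₁+γ₂) / ( ψ(δ)·ψ(γ₁+γ₂−δ) ); i.e., the left-hand side, as a function of λ, is maximized at λ* = γ₁·δ/(γ₁+γ₂). -/
theorem Real.rpow_self_eq_exp_mul_log {x : ℝ} (hx : 0 ≤ x) : x ^ x = Real.exp (x * Real.log x) := by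
  rcases hx.eq_or_lt with rfl | hx
  · simp
  · rw [Real.rpow_def_of_pos hx, mul_comm]

/-- The pointwise form of Gibbs' inequality. -/
theorem Real.mul_log_le_mul_log_add_sub {a b : ℝ} (ha : 0 ≤ a) (hb : 0 < b) :
    a * Real.log b ≤ a * Real.log a + b - a := by
  rcases ha.eq_or_lt with rfl | ha
  · simpa using hb.le
  · have h := mul_le_mul_of_nonneg_left (Real.log_le_sub_one_of_pos (div_pos hb ha)) ha.le
    rw [Real.log_div hb.ne' ha.ne', mul_sub, mul_sub, mul_div_cancel₀ _ ha.ne'] at h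
    linarith

/-- Gibbs' inequality for one cell of a contingency table, compared with the product `r * c / n`
of its marginals. -/
theorem Real.mul_log_marginals_le {a r c n : ℝ} (ha : 0 ≤ a) (hr : 0 < r) (hc : 0 < c)
    (hn : 0 < n) :
    a * (Real.log r + Real.log c - Real.log n) ≤ a * Real.log a + r * c / n - a := by
  have h := Real.mul_log_le_mul_log_add_sub ha (div_pos (mul_pos hr hc) hn)
  rwa [Real.log_div (mul_pos hr hc).ne' hn.ne', Real.log_mul hr.ne' hc.ne'] at h

/-- For `γ₁, γ₂ > 0`, `0 < δ < γ₁+γ₂`, `ψ(x)=x^x` (real power,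
`ψ(0)=1`), and every `λ` with `max(0, δ−γ₂) ≤ λ ≤ min(γ₁, δ)`:
`ψ(γ₁)ψ(γ₂)/(ψ(λ)ψ(γ₁−λ)ψ(δ−λ)ψ(γ₂−δ+λ)) ≤ ψ(γ₁+γ₂)/(ψ(δ)ψ(γ₁+γ₂−δ))`,
i.e. the left-hand side is maximized at `λ* = γ₁δ/(γ₁+γ₂)`. -/
theorem stmt12 (γ₁ γ₂ δ : ℝ) (h1 : 0 < γ₁) (h2 : 0 < γ₂) (hδ0 : 0 < δ)
    (hδ : δ < γ₁ + γ₂) (l : ℝ) (hl1 : max 0 (δ - γ₂) ≤ l) (hl2 : l ≤ min γ₁ δ) :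
    (fun ψ : ℝ → ℝ =>
      ψ γ₁ * ψ γ₂ / (ψ l * ψ (γ₁ - l) * ψ (δ - l) * ψ (γ₂ - δ + l)) ≤
        ψ (γ₁ + γ₂) / (ψ δ * ψ (γ₁ + γ₂ - δ)))
      (fun x => x ^ x) := by
  obtain ⟨hl0, hl3⟩ := max_le_iff.mp hl1
  obtain ⟨hl4, hl5⟩ := le_min_iff.mp hl2
  have hn : 0 < γ₁ + γ₂ := by linarith
  have hc : 0 < γ₁ + γ₂ - δ := by linarith
  have ha₁₂ : 0 ≤ γ₁ - l := by linarith
  have ha₂₁ : 0 ≤ δ - l := by linarith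
  have ha₂₂ : 0 ≤ γ₂ - δ + l := by linarith
  have g₁₁ := Real.mul_log_marginals_le hl0 h1 hδ0 hn
  have g₁₂ := Real.mul_log_marginals_le ha₁₂ h1 hc hn
  have g₂₁ := Real.mul_log_marginals_le ha₂₁ h2 hδ0 hn
  have g₂₂ := Real.mul_log_marginals_le ha₂₂ h2 hc hn
  have hsum : γ₁ * δ / (γ₁ + γ₂) + γ₁ * (γ₁ + γ₂ - δ) / (γ₁ + γ₂) + γ₂ * δ / (γ₁ + γ₂)
      + γ₂ * (γ₁ + γ₂ - δ) / (γ₁ + γ₂) = γ₁ + γ₂ := by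
    field_simp
    ring
  beta_reduce
  rw [Real.rpow_self_eq_exp_mul_log h1.le, Real.rpow_self_eq_exp_mul_log h2.le,
    Real.rpow_self_eq_exp_mul_log hl0, Real.rpow_self_eq_exp_mul_log ha₁₂,
    Real.rpow_self_eq_exp_mul_log ha₂₁, Real.rpow_self_eq_exp_mul_log ha₂₂,
    Real.rpow_self_eq_exp_mul_log hn.le, Real.rpow_self_eq_exp_mul_log hδ0.le,
    Real.rpow_self_eq_exp_mul_log hc.le]
  simp only [← Real.exp_add, ← Real.exp_sub]
  apply Real.exp_le_exp.mpr
  linarith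
end

section
/- Let P, q ∈ (0,1) be reals, let α₃, α₆ ≥ 0 and γ₁, γ₂ ≥ 0 with γ := γ₁+γ₂ > 0, and set ᾱ = α₃+α₆+γ₁+γ₂. Define ψ(x)=x^x for x>0 with ψ(0)=1, and for α' ∈ [α₃, ᾱ−α₆] define β(α') = P^{α'} · q^{ᾱ−α'} · ψ(γ₁+γ₂) / ( ψ(α'−α₃) · ψ(ᾱ−α₆−α') ). Let α* = α₃ + (P/(P+q))·γ. Then: (i) β is nondecreasing on [α₃, α*] and nonincreasing on [α*, ᾱ−α₆]; (ii) β(α*) = P^{α₃} · q^{α₆} · (P+q)^{γ}; (iii) for every α₀ ∈ [α₃, ᾱ−α₆], the supremum of β over [α₀, ᾱ−α₆] equals β(α*) if α* ≥ α₀, and equals β(α₀) otherwise. -/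
open Real

theorem rpow_self_eq_exp_neg_negMulLog {x : ℝ} (hx : 0 ≤ x) : x ^ x = exp (-negMulLog x) := by
  rcases hx.eq_or_lt with rfl | hx
  · simp
  · rw [rpow_def_of_pos hx, negMulLog]
    congr 1
    ring

/-- The exponent of a two-cell entropy term on `[a, b]`, tilted by the weights `P` and `q`. -/
noncomputable def tiltedEntropy (P q A a b t : ℝ) : ℝ :=
  t * log P + (A - t) * log q + (negMulLog (t - a) + negMulLog (b - t))

theorem continuous_tiltedEntropy (P q A a b : ℝ) : Continuous (tiltedEntropy P q A a b) := by
  unfold tiltedEntropy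
  fun_prop

theorem hasDerivAt_tiltedEntropy (P q A : ℝ) {a b t : ℝ} (ha : a < t) (hb : t < b) :
    HasDerivAt (tiltedEntropy P q A a b)
      ((log P + log (b - t)) - (log q + log (t - a))) t := by
  have h1 := (hasDerivAt_negMulLog (sub_pos.2 ha).ne').comp t ((hasDerivAt_id t).sub_const a)
  have h2 := (hasDerivAt_negMulLog (sub_pos.2 hb).ne').comp t ((hasDerivAt_id t).const_sub b)
  have h3 := (hasDerivAt_id t).mul_const (log P)
  have h4 := ((hasDerivAt_id t).const_sub A).mul_const (log q)
  refine ((h3.add h4).add (h1.add h2)).congr_deriv ?_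
  ring

theorem monotoneOn_tiltedEntropy {P q a b s : ℝ} (A : ℝ) (hP : 0 < P) (hq : 0 < q)
    (hsb : s ≤ b) (hs : q * (s - a) = P * (b - s)) :
    MonotoneOn (tiltedEntropy P q A a b) (Set.Icc a s) := by
  refine monotoneOn_of_deriv_nonneg (convex_Icc a s)
    (continuous_tiltedEntropy P q A a b).continuousOn ?_ ?_
  · rw [interior_Icc]
    exact fun t ht => (hasDerivAt_tiltedEntropy P q A ht.1
      (ht.2.trans_le hsb)).differentiableAt.differentiableWithinAt
  · rw [interior_Icc]
    rintro t ⟨hat, hts⟩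
    have htb := hts.trans_le hsb
    rw [(hasDerivAt_tiltedEntropy P q A hat htb).deriv, sub_nonneg,
      ← log_mul hq.ne' (sub_pos.2 hat).ne', ← log_mul hP.ne' (sub_pos.2 htb).ne']
    exact log_le_log (mul_pos hq (sub_pos.2 hat)) (by nlinarith)

theorem antitoneOn_tiltedEntropy {P q a b s : ℝ} (A : ℝ) (hP : 0 < P) (hq : 0 < q)
    (has : a ≤ s) (hs : q * (s - a) = P * (b - s)) :
    AntitoneOn (tiltedEntropy P q A a b) (Set.Icc s b) := by
  refine antitoneOn_of_deriv_nonpos (convex_Icc s b)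
    (continuous_tiltedEntropy P q A a b).continuousOn ?_ ?_
  · rw [interior_Icc]
    exact fun t ht => (hasDerivAt_tiltedEntropy P q A (has.trans_lt ht.1)
      ht.2).differentiableAt.differentiableWithinAt
  · rw [interior_Icc]
    rintro t ⟨hst, htb⟩
    have hat := has.trans_lt hst
    rw [(hasDerivAt_tiltedEntropy P q A hat htb).deriv, sub_nonpos,
      ← log_mul hq.ne' (sub_pos.2 hat).ne', ← log_mul hP.ne' (sub_pos.2 htb).ne']
    exact log_le_log (mul_pos hP (sub_pos.2 htb)) (by nlinarith)

/-- A function increasing on `[a, s]` and decreasing on `[s, b]` is maximal on `[c, b]` at the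
point of `[c, b]` nearest to `s`. -/
theorem isGreatest_image_Icc_of_unimodal {f : ℝ → ℝ} {a b s c : ℝ}
    (hmono : MonotoneOn f (Set.Icc a s)) (hanti : AntitoneOn f (Set.Icc s b))
    (has : a ≤ s) (hsb : s ≤ b) (hc : c ∈ Set.Icc a b) :
    IsGreatest (f '' Set.Icc c b) (if c ≤ s then f s else f c) := by
  split_ifs with h
  · refine ⟨⟨s, ⟨h, hsb⟩, rfl⟩, ?_⟩
    rintro _ ⟨t, ht, rfl⟩
    rcases le_total t s with hts | hst
    · exact hmono ⟨hc.1.trans ht.1, hts⟩ ⟨has, le_rfl⟩ hts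
    · exact hanti ⟨le_rfl, hsb⟩ ⟨hst, ht.2⟩ hst
  · refine ⟨⟨c, ⟨le_rfl, hc.2⟩, rfl⟩, ?_⟩
    rintro _ ⟨t, ht, rfl⟩
    have hsc := (not_le.1 h).le
    exact hanti ⟨hsc, hc.2⟩ ⟨hsc.trans ht.1, ht.2⟩ ht.1

/-- Let `P, q ∈ (0,1)`, `α₃, α₆ ≥ 0`, `γ₁, γ₂ ≥ 0` with
`γ = γ₁+γ₂ > 0`, `ᾱ = α₃+α₆+γ₁+γ₂`, `ψ(x)=x^x` (real power, `ψ(0)=1`), and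
for `α' ∈ [α₃, ᾱ−α₆]` let
`β(α') = P^{α'} q^{ᾱ−α'} ψ(γ₁+γ₂)/(ψ(α'−α₃) ψ(ᾱ−α₆−α'))`, and
`α* = α₃ + (P/(P+q))·γ`. Then (i) `β` is nondecreasing on `[α₃, α*]` and
nonincreasing on `[α*, ᾱ−α₆]`; (ii) `β(α*) = P^{α₃} q^{α₆} (P+q)^γ`;
(iii) for `α₀ ∈ [α₃, ᾱ−α₆]`, the supremum of `β` on `[α₀, ᾱ−α₆]` is
`β(α*)` if `α* ≥ α₀` and `β(α₀)` otherwise. -/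
theorem stmt13 (P q α₃ α₆ γ₁ γ₂ : ℝ) (hP : P ∈ Set.Ioo (0 : ℝ) 1)
    (hq : q ∈ Set.Ioo (0 : ℝ) 1) (h3 : 0 ≤ α₃) (h6 : 0 ≤ α₆)
    (hγ1 : 0 ≤ γ₁) (hγ2 : 0 ≤ γ₂) (hγ : 0 < γ₁ + γ₂) :
    (fun (ψ : ℝ → ℝ) (ᾱ : ℝ) (β : ℝ → ℝ) (αs : ℝ) =>
        (MonotoneOn β (Set.Icc α₃ αs) ∧ AntitoneOn β (Set.Icc αs (ᾱ - α₆))) ∧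
        β αs = P ^ α₃ * q ^ α₆ * (P + q) ^ (γ₁ + γ₂) ∧
        ∀ α₀ ∈ Set.Icc α₃ (ᾱ - α₆),
          IsGreatest (β '' Set.Icc α₀ (ᾱ - α₆)) (if α₀ ≤ αs then β αs else β α₀))
      (fun x => x ^ x)
      (α₃ + α₆ + γ₁ + γ₂)
      (fun α' =>
        P ^ α' * q ^ (α₃ + α₆ + γ₁ + γ₂ - α') * ((γ₁ + γ₂) ^ (γ₁ + γ₂)) /
          ((α' - α₃) ^ (α' - α₃) *
            ((α₃ + α₆ + γ₁ + γ₂) - α₆ - α') ^ ((α₃ + α₆ + γ₁ + γ₂) - α₆ - α')))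
      (α₃ + P / (P + q) * (γ₁ + γ₂)) := by
  obtain ⟨hP, -⟩ := hP
  obtain ⟨hq, -⟩ := hq
  have hPq : 0 < P + q := add_pos hP hq
  beta_reduce
  set β : ℝ → ℝ := fun α' =>
    P ^ α' * q ^ (α₃ + α₆ + γ₁ + γ₂ - α') * ((γ₁ + γ₂) ^ (γ₁ + γ₂)) /
      ((α' - α₃) ^ (α' - α₃) *
        ((α₃ + α₆ + γ₁ + γ₂) - α₆ - α') ^ ((α₃ + α₆ + γ₁ + γ₂) - α₆ - α')) with hβ
  set A := α₃ + α₆ + γ₁ + γ₂ with hA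
  set s := α₃ + P / (P + q) * (γ₁ + γ₂) with hs
  have hsa : s - α₃ = P * (γ₁ + γ₂) / (P + q) := by rw [hs]; ring
  have hbs : A - α₆ - s = q * (γ₁ + γ₂) / (P + q) := by
    rw [hs, hA]
    field_simp
    ring
  have has : α₃ ≤ s := by
    rw [← sub_nonneg, hsa]
    positivity
  have hsb : s ≤ A - α₆ := by
    rw [← sub_nonneg, hbs]
    positivity
  have hcrit : q * (s - α₃) = P * (A - α₆ - s) := by
    rw [hsa, hbs]
    ring
  have hexp : ∀ t ∈ Set.Icc α₃ (A - α₆), β t =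
      exp (tiltedEntropy P q A α₃ (A - α₆) t + (γ₁ + γ₂) * log (γ₁ + γ₂)) := by
    intro t ht
    simp only [hβ]
    rw [rpow_self_eq_exp_neg_negMulLog (sub_nonneg.2 ht.1),
      rpow_self_eq_exp_neg_negMulLog (sub_nonneg.2 ht.2), rpow_def_of_pos hP,
      rpow_def_of_pos hq, rpow_def_of_pos hγ, ← exp_add, ← exp_add, ← exp_add, ← exp_sub,
      tiltedEntropy]
    congr 1
    ring
  have hmono : MonotoneOn β (Set.Icc α₃ s) := by
    intro x hx y hy hxy
    rw [hexp x ⟨hx.1, hx.2.trans hsb⟩, hexp y ⟨hy.1, hy.2.trans hsb⟩]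
    gcongr
    exact monotoneOn_tiltedEntropy A hP hq hsb hcrit hx hy hxy
  have hanti : AntitoneOn β (Set.Icc s (A - α₆)) := by
    intro x hx y hy hxy
    rw [hexp x ⟨has.trans hx.1, hx.2⟩, hexp y ⟨has.trans hy.1, hy.2⟩]
    gcongr
    exact antitoneOn_tiltedEntropy A hP hq has hcrit hx hy hxy
  refine ⟨⟨hmono, hanti⟩, ?_, fun α₀ hα₀ =>
    isGreatest_image_Icc_of_unimodal hmono hanti has hsb hα₀⟩
  have hlogP : log (s - α₃) = log P + log (γ₁ + γ₂) - log (P + q) := by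
    rw [hsa, log_div (mul_pos hP hγ).ne' hPq.ne', log_mul hP.ne' hγ.ne']
  have hlogq : log (A - α₆ - s) = log q + log (γ₁ + γ₂) - log (P + q) := by
    rw [hbs, log_div (mul_pos hq hγ).ne' hPq.ne', log_mul hq.ne' hγ.ne']
  refine (hexp s ⟨has, hsb⟩).trans ?_
  rw [rpow_def_of_pos hP, rpow_def_of_pos hq, rpow_def_of_pos hPq,
    ← exp_add, ← exp_add, tiltedEntropy, negMulLog, negMulLog, hlogP, hlogq]
  congr 1
  rw [hA]
  ring
end
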